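/- Let A be a complex Banach algebra satisfying the homotopy conditions below with constants c₁, c₂, and let n ≥ 0. For every cyclic (n+2)-cocycle ψ ∈ Z^{n+2}_λ(A) there exist χ ∈ C^{n+1}_λ(A) and a cyclic cocycle φ ∈ Zⁿ_λ(A) such that ψ = S̃φ + δχ, with ‖χ‖ ≤ (n+1)² c₁c₂ ‖ψ‖ and ‖φ‖ ≤ c₁c₂ ‖ψ‖. -/

import Mathlib

/-- `Coch A n` is `Cⁿ(A)`: the Banach space of bounded `(n+1)`-multilinear
functionals on `A`.  In particular `Coch A 1` is the space of bounded bilinear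
functionals on `A × A`, i.e. the dual of the projective tensor product `A ⊗̂ A`. -/
abbrev Coch (A : Type*) [NonUnitalNormedRing A] [NormedSpace ℂ A] (n : ℕ) :=
  ContinuousMultilinearMap ℂ (fun _ : Fin (n + 1) => A) ℂ

variable {A : Type*} [NonUnitalNormedRing A] [NormedSpace ℂ A]

/-- The `j`-th face `(a₀, …, aⱼaⱼ₊₁, …, a_{n+1})` of a tuple. -/
def hochFace {n : ℕ} (a : Fin (n + 2) → A) (j : Fin (n + 1)) : Fin (n + 1) → A :=
  fun i =>
    if (i : ℕ) < (j : ℕ) then a i.castSucc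
    else if (i : ℕ) = (j : ℕ) then a i.castSucc * a i.succ
    else a i.succ

/-- The truncated Hochschild coboundary `δ'`. -/
noncomputable def hochDelta' (n : ℕ) (φ : (Fin (n + 1) → A) → ℂ) :
    (Fin (n + 2) → A) → ℂ :=
  fun a => ∑ j : Fin (n + 1), (-1 : ℂ) ^ (j : ℕ) * φ (hochFace a j)

/-- The Hochschild coboundary `δ`. -/
noncomputable def hochDelta (n : ℕ) (φ : (Fin (n + 1) → A) → ℂ) :
    (Fin (n + 2) → A) → ℂ :=
  fun a => hochDelta' n φ a +
    (-1 : ℂ) ^ (n + 1) *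
      φ (fun i => if i = 0 then a (Fin.last (n + 1)) * a 0 else a i.castSucc)

/-- The signed cyclic shift `t`: `tψ(a₀,…,aₙ) = (−1)ⁿ ψ(aₙ,a₀,…,a_{n−1})`. -/
noncomputable def cycT (n : ℕ) (φ : (Fin (n + 1) → A) → ℂ) :
    (Fin (n + 1) → A) → ℂ :=
  fun a => (-1 : ℂ) ^ n * φ (fun i => a (i - 1))

/-- The averaging operator `N = (n+1)⁻¹ ∑_{k=0}^{n} tᵏ` in degree `n`. -/
noncomputable def cycN (n : ℕ) (φ : (Fin (n + 1) → A) → ℂ) :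
    (Fin (n + 1) → A) → ℂ :=
  fun a => ((n : ℂ) + 1)⁻¹ * ∑ k ∈ Finset.range (n + 1), (cycT n)^[k] φ a

/-- The operator `h = −2(n+1)⁻¹ ∑_{k=1}^{n} k tᵏ` in degree `n`. -/
noncomputable def cycH (n : ℕ) (φ : (Fin (n + 1) → A) → ℂ) :
    (Fin (n + 1) → A) → ℂ :=
  fun a => (-2 / ((n : ℂ) + 1)) * ∑ k ∈ Finset.range (n + 1), (k : ℂ) * (cycT n)^[k] φ a

/-- The shift map `S̃ψ = N(δ(h(δ'ψ)))` on cyclic `n`-cochains. -/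
noncomputable def cycS (n : ℕ) (φ : (Fin (n + 1) → A) → ℂ) :
    (Fin (n + 3) → A) → ℂ :=
  cycN (n + 2) (hochDelta (n + 1) (cycH (n + 1) (hochDelta' n φ)))

section helpers

theorem hochFace_update {n : ℕ} (j : Fin (n + 1)) (a : Fin (n + 2) → A) (i : Fin (n + 2))
    [DecidableEq (Fin (n + 2))] [IsScalarTower ℂ A A] [SMulCommClass ℂ A A] :
    ∃ (p : Fin (n + 1)) (L : A →ₗ[ℂ] A), ∀ x : A,
      hochFace (Function.update a i x) j = Function.update (hochFace a j) p (L x) := by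
  rcases lt_trichotomy (i : ℕ) (j : ℕ) with h | h | h
  · refine ⟨⟨i, by omega⟩, LinearMap.id, fun x => ?_⟩
    funext q
    simp only [hochFace, Function.update_apply, Fin.ext_iff, Fin.val_castSucc, Fin.val_succ,
      LinearMap.id_apply]
    split_ifs <;> first | rfl | omega
  · refine ⟨j, LinearMap.mulRight ℂ (a j.succ), fun x => ?_⟩
    funext q
    by_cases hq : q = j
    · subst hq
      simp [hochFace, Function.update_apply, Fin.ext_iff, h]
    · have hq' : (q : ℕ) ≠ j := fun h => hq (Fin.ext h)
      simp only [hochFace, Function.update_apply, Fin.ext_iff, Fin.val_castSucc, Fin.val_succ]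
      split_ifs <;> first | rfl | omega
  · by_cases h' : (i : ℕ) = j + 1
    · refine ⟨j, LinearMap.mulLeft ℂ (a j.castSucc), fun x => ?_⟩
      funext q
      by_cases hq : q = j
      · subst hq
        simp [hochFace, Function.update_apply, Fin.ext_iff, h']
      · have hq' : (q : ℕ) ≠ j := fun h => hq (Fin.ext h)
        simp only [hochFace, Function.update_apply, Fin.ext_iff, Fin.val_castSucc, Fin.val_succ]
        split_ifs <;> first | rfl | omega
    · refine ⟨⟨i - 1, by omega⟩, LinearMap.id, fun x => ?_⟩
      funext q
      simp only [hochFace, Function.update_apply, Fin.ext_iff, Fin.val_castSucc, Fin.val_succ,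
        LinearMap.id_apply]
      split_ifs <;> first | rfl | omega

theorem hochFace_prod_le {n : ℕ} (j : Fin (n + 1)) (a : Fin (n + 2) → A) :
    ∏ i, ‖hochFace a j i‖ ≤ ∏ i, ‖a i‖ := by
  rw [Fin.prod_univ_succAbove (fun i => ‖a i‖) j.succ]
  have h : ∀ i, ‖hochFace a j i‖ ≤
      (if i = j then ‖a j.succ‖ else 1) * ‖a (j.succ.succAbove i)‖ := by
    intro i
    rcases lt_trichotomy i j with h | h | h
    · rw [Fin.succAbove_of_castSucc_lt _ _ (by simpa [Fin.lt_def] using Nat.lt_succ_of_lt h)]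
      have h1 : (i : ℕ) < j := h
      simp [hochFace, h1, h.ne]
    · subst h
      rw [Fin.succAbove_of_castSucc_lt _ _ (by simp [Fin.lt_def])]
      simp only [hochFace, lt_irrefl, if_true, if_false]
      rw [mul_comm]
      exact norm_mul_le _ _
    · rw [Fin.succAbove_of_le_castSucc _ _ (by simpa [Fin.le_def] using h)]
      have h1 : ¬ (i : ℕ) < j := by
        have : (j : ℕ) < i := h
        omega
      have h2 : ¬ (i : ℕ) = j := by
        have : (j : ℕ) < i := h
        omega
      simp [hochFace, h1, h2, h.ne']
  refine (Finset.prod_le_prod (fun i _ => norm_nonneg _) (fun i _ => h i)).trans ?_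
  rw [Finset.prod_mul_distrib, Finset.prod_ite_eq' Finset.univ j]
  simp

noncomputable def opT (n : ℕ) : Module.End ℂ (Coch A n) where
  toFun φ := ((-1 : ℂ) ^ n) • φ.domDomCongr (Equiv.subRight (1 : Fin (n + 1)))
  map_add' φ φ' := by
    ext a
    simp [mul_add]
  map_smul' c φ := by
    ext a
    simp
    ring

theorem opT_apply (n : ℕ) (φ : Coch A n) (a : Fin (n + 1) → A) :
    opT n φ a = (-1 : ℂ) ^ n * φ (fun i => a (i - 1)) := by
  simp [opT]

theorem opT_coe (n : ℕ) (φ : Coch A n) : ⇑(opT n φ) = cycT n ⇑φ := by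
  funext a
  rw [opT_apply]; rfl

theorem opT_norm (n : ℕ) (φ : Coch A n) : ‖opT n φ‖ = ‖φ‖ := by
  simp only [opT, LinearMap.coe_mk, AddHom.coe_mk, norm_smul, norm_pow, norm_neg, norm_one,
    one_pow, one_mul]
  exact ContinuousMultilinearMap.norm_domDomCongr ℂ A ℂ (Equiv.subRight (1 : Fin (n + 1))) φ

theorem opT_pow_norm (n k : ℕ) (φ : Coch A n) : ‖(opT n ^ k) φ‖ = ‖φ‖ := by
  induction k with
  | zero => simp
  | succ k ih => rw [pow_succ', Module.End.mul_apply, opT_norm, ih]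

theorem opT_pow_coe (n k : ℕ) (φ : Coch A n) : ⇑((opT n ^ k) φ) = (cycT n)^[k] ⇑φ := by
  induction k with
  | zero => simp
  | succ k ih => rw [pow_succ', Module.End.mul_apply, opT_coe, ih, Function.iterate_succ_apply']

theorem opT_pow_apply (n k : ℕ) (φ : Coch A n) (a : Fin (n + 1) → A) :
    (opT n ^ k) φ a = ((-1 : ℂ) ^ n) ^ k * φ (fun i => a (i - k • (1 : Fin (n + 1)))) := by
  induction k generalizing a with
  | zero => simp
  | succ k ih =>
    rw [pow_succ', Module.End.mul_apply, opT_apply, ih]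
    have : ∀ i : Fin (n + 1), i - k • (1 : Fin (n + 1)) - 1 = i - (k + 1) • (1 : Fin (n + 1)) := by
      intro i; rw [succ_nsmul, sub_sub]
    simp only [this]
    ring

theorem opT_pow_self (n : ℕ) (φ : Coch A n) : (opT n ^ (n + 1)) φ = φ := by
  refine ContinuousMultilinearMap.ext fun (a : Fin (n + 1) → A) => ?_
  rw [opT_pow_apply]
  have h : (n + 1) • (1 : Fin (n + 1)) = 0 := by
    have := card_nsmul_eq_zero (x := (1 : Fin (n + 1)))
    rwa [Fintype.card_fin] at this
  rw [h, ← pow_mul, (Nat.even_mul_succ_self n).neg_one_pow]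
  simp

noncomputable def opN0 (n : ℕ) : Module.End ℂ (Coch A n) :=
  ∑ k ∈ Finset.range (n + 1), opT n ^ k

noncomputable def opN (n : ℕ) : Module.End ℂ (Coch A n) := ((n : ℂ) + 1)⁻¹ • opN0 n

noncomputable def opH (n : ℕ) : Module.End ℂ (Coch A n) :=
  (-2 / ((n : ℂ) + 1)) • ∑ k ∈ Finset.range (n + 1), (k : ℂ) • opT n ^ k

theorem opN_coe (n : ℕ) (φ : Coch A n) : ⇑(opN n φ) = cycN n ⇑φ := by
  funext a
  simp only [opN, opN0, cycN, LinearMap.smul_apply, LinearMap.sum_apply,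
    _root_.smul_apply, _root_.sum_apply, smul_eq_mul,
    opT_pow_coe]

theorem opH_coe (n : ℕ) (φ : Coch A n) : ⇑(opH n φ) = cycH n ⇑φ := by
  funext a
  simp only [opH, cycH, LinearMap.smul_apply, LinearMap.sum_apply,
    _root_.smul_apply, _root_.sum_apply, smul_eq_mul,
    opT_pow_coe]

theorem opN_norm (n : ℕ) (φ : Coch A n) : ‖opN n φ‖ ≤ ‖φ‖ := by
  have hn : ‖((n : ℂ) + 1)⁻¹‖ = ((n : ℝ) + 1)⁻¹ := by
    rw [norm_inv]
    congr 1
    exact_mod_cast Complex.norm_natCast (n + 1)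
  simp only [opN, opN0, LinearMap.smul_apply, LinearMap.sum_apply, norm_smul, hn]
  have h := norm_sum_le (Finset.range (n + 1)) (fun k => (opT n ^ k) φ)
  simp only [opT_pow_norm, Finset.sum_const, Finset.card_range, nsmul_eq_mul] at h
  push_cast at h
  rw [inv_mul_le_iff₀ (by positivity)]
  exact h

theorem opH_norm (n : ℕ) (φ : Coch A n) : ‖opH n φ‖ ≤ n * ‖φ‖ := by
  have hn : ‖(-2 / ((n : ℂ) + 1))‖ = 2 / ((n : ℝ) + 1) := by
    rw [norm_div, norm_neg]
    congr 1
    · simp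
    · exact_mod_cast Complex.norm_natCast (n + 1)
  simp only [opH, LinearMap.smul_apply, LinearMap.sum_apply, norm_smul, hn]
  have h := norm_sum_le (Finset.range (n + 1)) (fun k => (k : ℂ) • (opT n ^ k) φ)
  simp only [norm_smul, opT_pow_norm, Complex.norm_natCast] at h
  rw [← Finset.sum_mul] at h
  have h2 : (∑ k ∈ Finset.range (n + 1), (k : ℝ)) * 2 = (n + 1) * n := by
    have := Finset.sum_range_id_mul_two (n + 1)
    simp only [Nat.add_sub_cancel] at this
    have := congrArg (Nat.cast : ℕ → ℝ) this
    push_cast at this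
    exact this
  have h3 : (∑ k ∈ Finset.range (n + 1), (k : ℝ)) = (n + 1) * n / 2 := by linarith
  rw [h3] at h
  calc _ ≤ 2 / ((n : ℝ) + 1) * ((n + 1) * n / 2 * ‖φ‖) :=
        mul_le_mul_of_nonneg_left h (by positivity)
    _ = _ := by field_simp

theorem opT_mul_N0 (n : ℕ) : (opT n : Module.End ℂ (Coch A n)) * opN0 n = opN0 n := by
  refine LinearMap.ext fun φ => ?_
  rw [opN0, Module.End.mul_apply, LinearMap.sum_apply, map_sum]
  have h := Finset.sum_range_succ (fun k => (opT n ^ k) φ) (n + 1)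
  rw [Finset.sum_range_succ', opT_pow_self, pow_zero] at h
  simp only [← Module.End.mul_apply, ← pow_succ']
  exact add_right_cancel h

theorem opN0_mul_T (n : ℕ) : (opN0 n : Module.End ℂ (Coch A n)) * opT n = opN0 n := by
  conv_rhs => rw [← opT_mul_N0]
  rw [opN0, Finset.mul_sum, Finset.sum_mul]
  simp only [← pow_succ', ← pow_succ]

theorem opT_pow_mul_N0 (n k : ℕ) :
    (opT n : Module.End ℂ (Coch A n)) ^ k * opN0 n = opN0 n := by
  induction k with
  | zero => simp
  | succ k ih => rw [pow_succ, mul_assoc, opT_mul_N0, ih]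

theorem opN0_mul_T_pow (n k : ℕ) :
    (opN0 n : Module.End ℂ (Coch A n)) * opT n ^ k = opN0 n := by
  induction k with
  | zero => simp
  | succ k ih => rw [pow_succ, ← mul_assoc, ih, opN0_mul_T]

theorem opT_N (n : ℕ) (φ : Coch A n) : opT n (opN n φ) = opN n φ := by
  have := congrArg (fun f => f φ) (opT_mul_N0 (A := A) n)
  simp only [Module.End.mul_apply] at this
  simp [opN, this]

theorem opN_fix (n : ℕ) (φ : Coch A n) (h : opT n φ = φ) : opN n φ = φ := by
  have hk : ∀ k : ℕ, (opT n ^ k) φ = φ := by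
    intro k
    induction k with
    | zero => simp
    | succ k ih => rw [pow_succ, Module.End.mul_apply, h, ih]
  simp only [opN, opN0, LinearMap.smul_apply, LinearMap.sum_apply, hk, Finset.sum_const,
    Finset.card_range]
  rw [← Nat.cast_smul_eq_nsmul ℂ, smul_smul]
  have : ((n : ℂ) + 1) ≠ 0 := by exact_mod_cast Nat.succ_ne_zero n
  push_cast
  rw [inv_mul_cancel₀ this, one_smul]

theorem opT_comm_H (n : ℕ) : (opT n : Module.End ℂ (Coch A n)) * opH n = opH n * opT n := by
  simp only [opH, mul_smul_comm, smul_mul_assoc, Finset.mul_sum, Finset.sum_mul, ← pow_succ',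
    ← pow_succ]

theorem opH_sub_apply (n : ℕ) (φ : Coch A n) :
    opH n (φ - opT n φ) = (2 : ℂ) • (φ - opN n φ) := by
  have key : ∀ m : ℕ, (∑ k ∈ Finset.range (m + 1), (k : ℂ) • (opT n ^ k) (φ - opT n φ))
      = (∑ k ∈ Finset.range (m + 1), (opT n ^ k) φ) - φ
        - (m : ℂ) • (opT n ^ (m + 1)) φ := by
    intro m
    induction m with
    | zero =>
      rw [Finset.sum_range_one, Finset.sum_range_one, Nat.cast_zero, pow_zero,
        Module.End.one_apply, Module.End.one_apply, sub_self]
      have z : ∀ x : Coch A n, (0 : ℂ) • x = 0 := fun x => zero_smul ℂ x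
      exact (z _).trans (by rw [z, sub_zero])
    | succ m ih =>
      rw [Finset.sum_range_succ, ih, Finset.sum_range_succ _ (m + 1)]
      rw [map_sub, ← Module.End.mul_apply (opT n ^ (m + 1)), ← pow_succ]
      push_cast
      module
  have hn : ((n : ℂ) + 1) ≠ 0 := by exact_mod_cast Nat.succ_ne_zero n
  simp only [opH, opN, opN0, LinearMap.smul_apply, LinearMap.sum_apply]
  rw [key, opT_pow_self]
  generalize (∑ k ∈ Finset.range (n + 1), (opT n ^ k) φ) = s
  match_scalars <;> field_simp <;> ring

theorem sub_opH_apply (n : ℕ) (φ : Coch A n) :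
    opH n φ - opT n (opH n φ) = (2 : ℂ) • (φ - opN n φ) := by
  have := congrArg (fun f => f φ) (opT_comm_H (A := A) n)
  simp only [Module.End.mul_apply] at this
  rw [this, ← map_sub, opH_sub_apply]

variable [IsScalarTower ℂ A A] [SMulCommClass ℂ A A]

noncomputable def faceM {n : ℕ} (j : Fin (n + 1)) (φ : Coch A n) :
    MultilinearMap ℂ (fun _ : Fin (n + 2) => A) ℂ where
  toFun a := φ (hochFace a j)
  map_update_add' a i x y := by
    obtain ⟨p, L, h⟩ := hochFace_update j a i
    simp only [h, map_add, ContinuousMultilinearMap.map_update_add]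
  map_update_smul' a i c x := by
    obtain ⟨p, L, h⟩ := hochFace_update j a i
    simp only [h, map_smul, ContinuousMultilinearMap.map_update_smul]

theorem faceM_bound {n : ℕ} (j : Fin (n + 1)) (φ : Coch A n) (a : Fin (n + 2) → A) :
    ‖faceM j φ a‖ ≤ ‖φ‖ * ∏ i, ‖a i‖ :=
  (φ.le_opNorm _).trans (mul_le_mul_of_nonneg_left (hochFace_prod_le j a) (norm_nonneg _))

/-- signed face -/
noncomputable def opD (n : ℕ) (j : Fin (n + 1)) : Coch A n →ₗ[ℂ] Coch A (n + 1) where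
  toFun φ := ((-1 : ℂ) ^ (j : ℕ)) • (faceM j φ).mkContinuous ‖φ‖ (faceM_bound j φ)
  map_add' φ φ' := by
    ext a
    simp [faceM, mul_add]
  map_smul' c φ := by
    ext a
    simp [faceM]
    ring

theorem opD_apply (n : ℕ) (j : Fin (n + 1)) (φ : Coch A n) (a : Fin (n + 2) → A) :
    opD n j φ a = (-1 : ℂ) ^ (j : ℕ) * φ (hochFace a j) := by
  simp [opD, faceM]

theorem opD_norm (n : ℕ) (j : Fin (n + 1)) (φ : Coch A n) : ‖opD n j φ‖ ≤ ‖φ‖ := by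
  simp only [opD, LinearMap.coe_mk, AddHom.coe_mk, norm_smul, norm_pow, norm_neg, norm_one,
    one_pow, one_mul]
  exact MultilinearMap.mkContinuous_norm_le _ (norm_nonneg _) _



theorem fin_sub_one_val {m : ℕ} (i : Fin (m + 1)) :
    ((i - 1 : Fin (m + 1)) : ℕ) = if (i : ℕ) = 0 then m else i - 1 := by
  rw [Fin.coe_sub_one]
  by_cases h : i = 0
  · subst h; simp
  · have h2 : (i : ℕ) ≠ 0 := fun h1 => h (Fin.ext h1)
    rw [if_neg h, if_neg h2]

theorem face_rot_succ {n : ℕ} (a : Fin (n + 2) → A) (j : Fin n) :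
    hochFace (fun i => a (i - 1)) j.succ = fun i => hochFace a j.castSucc (i - 1) := by
  have hj := j.2
  funext i
  have hi := i.2
  have e1 : (i : ℕ) ≠ 0 → (i.castSucc - 1 : Fin (n + 2)) = (i - 1).castSucc := by
    intro h; apply Fin.ext
    simp [fin_sub_one_val, h]
  have e2 : (i.succ - 1 : Fin (n + 2)) = i.castSucc := by
    apply Fin.ext; simp [fin_sub_one_val]
  have e3 : (i : ℕ) ≠ 0 → (i - 1).succ = i.castSucc := by
    intro h; apply Fin.ext
    simp [fin_sub_one_val, h]; omega
  have e4 : (i : ℕ) = 0 → (i.castSucc - 1 : Fin (n + 2)) = (i - 1).succ := by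
    intro h; apply Fin.ext
    simp [fin_sub_one_val, h]
  by_cases h : (i : ℕ) = 0
  · simp only [hochFace, e2, e4 h, fin_sub_one_val, h, Fin.val_succ, Fin.val_castSucc, if_true]
    split_ifs <;> first | rfl | omega
  · simp only [hochFace, e2, e1 h, e3 h, fin_sub_one_val, h, Fin.val_succ, Fin.val_castSucc,
      if_false]
    split_ifs <;> first | rfl | omega

theorem opT_D_succ (n : ℕ) (j : Fin n) (φ : Coch A n) :
    opT (n + 1) (opD n j.succ φ) = opD n j.castSucc (opT n φ) := by
  ext a
  rw [opT_apply, opD_apply, opD_apply, opT_apply]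
  have := face_rot_succ a j
  rw [this]
  simp only [Fin.val_succ, Fin.val_castSucc]
  ring

theorem face_rot_rot {n : ℕ} (a : Fin (n + 2) → A) :
    hochFace (fun i => a (i - 1 - 1)) 0 = fun i => hochFace a (Fin.last n) (i - 1) := by
  funext i
  have hi := i.2
  have e2 : (i.succ - 1 - 1 : Fin (n + 2)) = (i.castSucc - 1 : Fin (n + 2)) := by
    congr 1
    apply Fin.ext; simp [fin_sub_one_val]
  by_cases h : (i : ℕ) = 0
  · have e3 : (i.castSucc - 1 : Fin (n + 2)) = (i - 1).succ := by
      apply Fin.ext; simp [fin_sub_one_val, h]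
    have e4 : ((i - 1).succ - 1 : Fin (n + 2)) = (i - 1).castSucc := by
      apply Fin.ext; simp [fin_sub_one_val, h]
    simp only [hochFace, e2, e3, e4, fin_sub_one_val, h, if_true, Fin.val_last, Fin.val_zero,
      lt_irrefl, if_false]
  · have e3 : (i.castSucc - 1 : Fin (n + 2)) = (i - 1).castSucc := by
      apply Fin.ext; simp [fin_sub_one_val, h]
    simp only [hochFace, e2, e3, fin_sub_one_val, h, if_false, Fin.val_last, Fin.val_zero]
    split_ifs <;> first | rfl | omega

theorem opT_T_D_zero (n : ℕ) (φ : Coch A n) :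
    opT (n + 1) (opT (n + 1) (opD n 0 φ)) = opD n (Fin.last n) (opT n φ) := by
  ext a
  rw [opT_apply, opT_apply, opD_apply, opD_apply, opT_apply]
  have := face_rot_rot a
  rw [this]
  simp only [Fin.val_zero, Fin.val_last]
  have h1 : ((-1 : ℂ) ^ n) * (-1) ^ n = 1 := by rw [← mul_pow]; simp
  ring_nf

noncomputable def opDel' (n : ℕ) : Coch A n →ₗ[ℂ] Coch A (n + 1) := ∑ j, opD n j

noncomputable def opDel (n : ℕ) : Coch A n →ₗ[ℂ] Coch A (n + 1) :=
  opDel' n + opT (n + 1) ∘ₗ opD n 0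

theorem opDel'_coe (n : ℕ) (φ : Coch A n) : ⇑(opDel' n φ) = hochDelta' n ⇑φ := by
  funext a
  simp only [opDel', LinearMap.sum_apply, _root_.sum_apply, opD_apply,
    hochDelta']

theorem face_rot_zero {n : ℕ} (a : Fin (n + 2) → A) :
    hochFace (fun i => a (i - 1)) 0 =
      (fun i : Fin (n + 1) => if i = 0 then a (Fin.last (n + 1)) * a 0 else a i.castSucc) := by
  funext i
  have e2 : (i.succ - 1 : Fin (n + 2)) = i.castSucc := by
    apply Fin.ext; simp [fin_sub_one_val]
  by_cases h : i = 0
  · subst h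
    have e3 : ((0 : Fin (n + 1)).castSucc - 1 : Fin (n + 2)) = Fin.last (n + 1) := by
      apply Fin.ext; simp [fin_sub_one_val]
    simp only [hochFace, e2, e3, if_true, lt_irrefl, if_false, Fin.val_zero] <;> rfl
  · have h' : (i : ℕ) ≠ 0 := fun h1 => h (Fin.ext h1)
    simp only [hochFace, e2, h, h', if_false, Fin.val_zero, Nat.not_lt_zero]

theorem opDel_coe (n : ℕ) (φ : Coch A n) : ⇑(opDel n φ) = hochDelta n ⇑φ := by
  funext a
  simp only [opDel, LinearMap.add_apply, _root_.add_apply, opDel'_coe,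
    LinearMap.comp_apply, opT_apply, opD_apply, hochDelta]
  have := face_rot_zero a
  rw [this]
  simp

theorem opDel_norm (n : ℕ) (φ : Coch A n) : ‖opDel n φ‖ ≤ (n + 2) * ‖φ‖ := by
  simp only [opDel, opDel', LinearMap.add_apply, LinearMap.sum_apply, LinearMap.comp_apply]
  have h1 : ‖∑ j, opD n j φ‖ ≤ (n + 1) * ‖φ‖ := by
    refine (norm_sum_le _ _).trans ?_
    refine (Finset.sum_le_sum (fun j _ => opD_norm n j φ)).trans ?_
    simp
  have h2 : ‖opT (n + 1) (opD n 0 φ)‖ ≤ ‖φ‖ := by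
    rw [opT_norm]; exact opD_norm n 0 φ
  have := norm_add_le (∑ j, opD n j φ) (opT (n + 1) (opD n 0 φ))
  linarith

theorem one_sub_opT_opDel (n : ℕ) (φ : Coch A n) :
    opDel n φ - opT (n + 1) (opDel n φ) = opDel' n (φ - opT n φ) := by
  have h1 : opT (n + 1) (opDel' n φ) + opD n (Fin.last n) (opT n φ)
      = opT (n + 1) (opD n 0 φ) + opDel' n (opT n φ) := by
    simp only [opDel', LinearMap.sum_apply, map_sum]
    rw [Fin.sum_univ_succ, Fin.sum_univ_castSucc (fun j => opD n j (opT n φ))]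
    simp only [opT_D_succ]
    abel
  have h3 : opDel n φ = opDel' n φ + opT (n + 1) (opD n 0 φ) := rfl
  rw [h3, map_add, opT_T_D_zero, map_sub]
  have h4 := eq_sub_of_add_eq h1
  rw [h4]
  abel

theorem opT_pow_D (n : ℕ) (j : Fin (n + 1)) (φ : Coch A n) :
    (opT (n + 1) ^ (j : ℕ)) (opD n j φ) = opD n 0 ((opT n ^ (j : ℕ)) φ) := by
  induction j using Fin.induction generalizing φ with
  | zero => simp
  | succ i ih =>
    rw [Fin.val_succ, pow_succ, Module.End.mul_apply, opT_D_succ, pow_succ, Module.End.mul_apply]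
    exact ih (opT n φ)

theorem opN0_Del' (n : ℕ) (φ : Coch A n) :
    opN0 (n + 1) (opDel' n φ) = opN0 (n + 1) (opD n 0 (opN0 n φ)) := by
  have h : ∀ j : Fin (n + 1), opN0 (n + 1) (opD n j φ)
      = opN0 (n + 1) (opD n 0 ((opT n ^ (j : ℕ)) φ)) := by
    intro j
    rw [← opT_pow_D, ← Module.End.mul_apply, opN0_mul_T_pow]
  simp only [opDel', LinearMap.sum_apply, map_sum, h]
  have h5 : opN0 n φ = ∑ k ∈ Finset.range (n + 1), (opT n ^ k) φ := by
    rw [opN0, LinearMap.sum_apply]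
  rw [h5, map_sum, map_sum]
  exact Fin.sum_univ_eq_sum_range (fun k => opN0 (n + 1) (opD n 0 ((opT n ^ k) φ))) (n + 1)

theorem opT_pow_Del_N0 (n : ℕ) (φ : Coch A n) :
    (opT (n + 1) ^ n) (opDel n (opN0 n φ)) = opN0 (n + 1) (opD n 0 (opN0 n φ)) := by
  have hN : ∀ k, (opT n ^ k) (opN0 n φ) = opN0 n φ := by
    intro k; rw [← Module.End.mul_apply, opT_pow_mul_N0]
  have h : ∀ j : Fin (n + 1), (opT (n + 1) ^ n) (opD n j (opN0 n φ))
      = (opT (n + 1) ^ (n - (j : ℕ))) (opD n 0 (opN0 n φ)) := by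
    intro j
    have := opT_pow_D n j (opN0 n φ)
    rw [hN] at this
    rw [← this, ← Module.End.mul_apply, ← pow_add]
    congr 3
    have := j.2
    omega
  simp only [opDel, opDel', LinearMap.add_apply, LinearMap.sum_apply, map_add, map_sum, h,
    LinearMap.comp_apply]
  rw [← Module.End.mul_apply (opT (n + 1) ^ n), ← pow_succ]
  rw [Fin.sum_univ_eq_sum_range
    (fun k => (opT (n + 1) ^ (n - k)) (opD n 0 (opN0 n φ))) (n + 1)]
  conv_rhs => rw [opN0, LinearMap.sum_apply, Finset.sum_range_succ]
  congr 1
  have := Finset.sum_range_reflect (fun k => (opT (n + 1) ^ k) (opD n 0 (opN0 n φ))) (n + 1)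
  simpa using this

theorem opDel_N_eq_zero (n : ℕ) (φ : Coch A n) (θ : Coch A (n + 1))
    (h : opDel' n φ = θ - opT (n + 1) θ) : opDel n (opN n φ) = 0 := by
  have h1 : opN0 (n + 1) (opDel' n φ) = 0 := by
    rw [h, map_sub, ← Module.End.mul_apply, opN0_mul_T, sub_self]
  rw [opN0_Del', ← opT_pow_Del_N0] at h1
  have h2 : opDel n (opN0 n φ) = 0 := by
    rw [← norm_eq_zero, ← opT_pow_norm (n + 1) n, h1, norm_zero]
  rw [opN, LinearMap.smul_apply, map_smul, h2]
  exact smul_zero (A := Coch A (n + 1)) (_ : ℂ)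

theorem hochFace_hochFace {n : ℕ} (a : Fin (n + 3) → A) (i j : Fin (n + 1)) (h : i ≤ j) :
    hochFace (hochFace a i.castSucc) j = hochFace (hochFace a j.succ) i := by
  have h' : (i : ℕ) ≤ j := h
  funext q
  simp only [hochFace, Fin.val_castSucc, Fin.val_succ, Fin.succ_castSucc]
  split_ifs <;> first | rfl | omega | rw [mul_assoc]

theorem opD_opD {n : ℕ} (φ : Coch A n) (i j : Fin (n + 1)) (h : i ≤ j) :
    opD (n + 1) j.succ (opD n i φ) = - opD (n + 1) i.castSucc (opD n j φ) := by
  ext a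
  rw [neg_apply]
  simp only [opD_apply, hochFace_hochFace a i j h, Fin.val_succ, Fin.val_castSucc]
  ring

theorem sum_sum_cancel {M : Type*} [AddCommGroup M] : ∀ (n : ℕ) (G : Fin (n + 2) → Fin (n + 1) → M),
    (∀ i j : Fin (n + 1), i ≤ j → G j.succ i = - G i.castSucc j) → ∑ i, ∑ j, G i j = 0
  | 0, G, h => by
    have := h 0 0 le_rfl
    simp only [Fin.succ_zero_eq_one, Fin.castSucc_zero] at this
    simp [Fin.sum_univ_two, this]
  | n + 1, G, h => by
    have ih := sum_sum_cancel n (fun i j => G i.castSucc j.castSucc) (fun i j hij => by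
      have := h i.castSucc j.castSucc hij
      rw [Fin.succ_castSucc] at this
      exact this)
    rw [Fin.sum_univ_castSucc]
    simp only [Fin.sum_univ_castSucc (n := n + 1) (fun j => G (Fin.castSucc _) j)]
    rw [Finset.sum_add_distrib, ih, zero_add, ← Finset.sum_add_distrib]
    refine Finset.sum_eq_zero fun i _ => ?_
    have := h i (Fin.last (n + 1)) (Fin.le_last i)
    rw [Fin.succ_last] at this
    rw [this, add_neg_cancel]

theorem opDel'_sq (n : ℕ) (φ : Coch A n) : opDel' (n + 1) (opDel' n φ) = 0 := by
  simp only [opDel', LinearMap.sum_apply, map_sum]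
  rw [Finset.sum_comm]
  exact sum_sum_cancel n (fun i j => opD (n + 1) i (opD n j φ)) (fun i j h => opD_opD φ i j h)

theorem opDel_sq (n : ℕ) (φ : Coch A n) : opDel (n + 1) (opDel n φ) = 0 := by
  have h3 : ∀ (m : ℕ) (φ : Coch A m), opDel m φ = opDel' m φ + opT (m + 1) (opD m 0 φ) :=
    fun _ _ => rfl
  have h0 : opD (n + 1) 1 (opD n 0 φ) = - opD (n + 1) 0 (opD n 0 φ) := opD_opD φ 0 0 le_rfl
  have e1 : opD (n + 1) 0 (opT (n + 1) (opD n 0 φ)) = - opT (n + 2) (opD (n + 1) 0 (opD n 0 φ)) := by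
    have := opT_D_succ (n + 1) 0 (opD n 0 φ)
    rw [Fin.succ_zero_eq_one, h0, map_neg] at this
    exact this.symm
  have e2 : opDel' (n + 1) (opT (n + 1) (opD n 0 φ)) =
      - opT (n + 2) (opD (n + 1) 0 (opDel' n φ))
        + opT (n + 2) (opT (n + 2) (opD (n + 1) 0 (opD n 0 φ))) := by
    simp only [opDel', LinearMap.sum_apply, map_sum]
    rw [Fin.sum_univ_castSucc, ← opT_T_D_zero, ← Finset.sum_neg_distrib]
    congr 1
    refine Finset.sum_congr rfl fun j _ => ?_
    rw [← opT_D_succ, opD_opD φ 0 j (Fin.zero_le j), map_neg, Fin.castSucc_zero]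
  rw [h3 (n + 1), h3 n, map_add, opDel'_sq, e2, map_add, e1, map_add, map_neg]
  abel

end helpers

/-- Proposition 2.7 of the paper. Under the homotopy
conditions with constants `c₁, c₂`, every cyclic `(n+2)`-cocycle `ψ` can be
written as `S̃φ + δχ` with `φ` a cyclic `n`-cocycle, `χ` a cyclic
`(n+1)`-cochain, `‖χ‖ ≤ (n+1)²c₁c₂‖ψ‖` and `‖φ‖ ≤ c₁c₂‖ψ‖`. -/
theorem cyclic_cocycle_eq_shift_plus_coboundary_of_homotopies
    {A : Type*} [NonUnitalNormedRing A] [NormedSpace ℂ A]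
    [IsScalarTower ℂ A A] [SMulCommClass ℂ A A] [CompleteSpace A]
    (σ σ' : ∀ n : ℕ, Coch A (n + 1) →L[ℂ] Coch A n)
    (hσ : ∀ (k : ℕ) (ψ : Coch A (k + 1)) (dψ : Coch A (k + 2)),
      ⇑dψ = hochDelta (k + 1) ⇑ψ →
      hochDelta k ⇑(σ k ψ) + ⇑(σ (k + 1) dψ) = ⇑ψ)
    (hσ' : ∀ (k : ℕ) (ψ : Coch A (k + 1)) (dψ : Coch A (k + 2)),
      ⇑dψ = hochDelta' (k + 1) ⇑ψ →
      hochDelta' k ⇑(σ' k ψ) + ⇑(σ' (k + 1) dψ) = ⇑ψ)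
    (hσ'0 : ∀ (ψ : Coch A 0) (dψ : Coch A 1),
      ⇑dψ = hochDelta' 0 ⇑ψ → σ' 0 dψ = ψ)
    (c₁ c₂ : ℝ) (hc₁ : ∀ n, ‖σ n‖ ≤ c₁) (hc₂ : ∀ n, ‖σ' n‖ ≤ c₂) (hc₂1 : 1 ≤ c₂)
    (n : ℕ) (ψ : Coch A (n + 2))
    (hcyc : cycT (n + 2) ⇑ψ = ⇑ψ)
    (hcocycle : hochDelta (n + 2) ⇑ψ = 0) :
    ∃ (χ : Coch A (n + 1)) (φ : Coch A n),
      cycT (n + 1) ⇑χ = ⇑χ ∧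
      cycT n ⇑φ = ⇑φ ∧
      hochDelta n ⇑φ = 0 ∧
      ⇑ψ = cycS n ⇑φ + hochDelta (n + 1) ⇑χ ∧
      ‖χ‖ ≤ ((n : ℝ) + 1) ^ 2 * c₁ * c₂ * ‖ψ‖ ∧
      ‖φ‖ ≤ c₁ * c₂ * ‖ψ‖ := by
  have hTψ : opT (n + 2) ψ = ψ := DFunLike.coe_injective ((opT_coe _ _).trans hcyc)
  -- θ
  obtain ⟨θ, hθdef⟩ : ∃ θ, θ = σ (n + 1) ψ := ⟨_, rfl⟩
  have hθ : opDel (n + 1) θ = ψ := by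
    have h := hσ (n + 1) ψ 0 (by rw [hcocycle]; rfl)
    rw [map_zero] at h
    apply DFunLike.coe_injective
    rw [opDel_coe, hθdef]
    simpa using h
  have hθn : ‖θ‖ ≤ c₁ * ‖ψ‖ := by
    rw [hθdef]; exact (σ (n + 1)).le_of_opNorm_le (hc₁ _) _
  obtain ⟨ρ, hρdef⟩ : ∃ ρ, ρ = σ' n (θ - opT (n + 1) θ) := ⟨_, rfl⟩
  have hρ : opDel' n ρ = θ - opT (n + 1) θ := by
    have h0 : opDel' (n + 1) (θ - opT (n + 1) θ) = 0 := by
      rw [← one_sub_opT_opDel, hθ, hTψ, sub_self]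
    have h := hσ' n (θ - opT (n + 1) θ) 0 (by rw [← opDel'_coe, h0])
    rw [map_zero] at h
    apply DFunLike.coe_injective
    rw [opDel'_coe, hρdef]
    simpa using h
  have hc₁0 : 0 ≤ c₁ := (ContinuousLinearMap.opNorm_nonneg (σ 0)).trans (hc₁ 0)
  have hc₂0 : 0 ≤ c₂ := zero_le_one.trans hc₂1
  have hρn : ‖ρ‖ ≤ 2 * (c₁ * c₂ * ‖ψ‖) := by
    have h1 : ‖ρ‖ ≤ c₂ * ‖θ - opT (n + 1) θ‖ := by
      rw [hρdef]; exact (σ' n).le_of_opNorm_le (hc₂ _) _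
    have h2 : ‖θ - opT (n + 1) θ‖ ≤ 2 * (c₁ * ‖ψ‖) := by
      have := norm_sub_le θ (opT (n + 1) θ)
      rw [opT_norm] at this
      linarith
    calc _ ≤ _ := h1
      _ ≤ c₂ * (2 * (c₁ * ‖ψ‖)) := mul_le_mul_of_nonneg_left h2 hc₂0
      _ = _ := by ring
  have hδN : ∀ (m : ℕ) (α : Coch A m), opN (m + 1) (opDel m (opN m α)) = opDel m (opN m α) := by
    intro m α
    apply opN_fix
    have h := one_sub_opT_opDel m (opN m α)
    rw [opT_N, sub_self, map_zero, sub_eq_zero] at h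
    exact h.symm
  refine ⟨opN (n + 1) (θ - (1 / 2 : ℂ) • opDel n (opH n ρ)), (1 / 2 : ℂ) • opN n ρ,
    ?_, ?_, ?_, ?_, ?_, ?_⟩
  · rw [← opT_coe, opT_N]
  · rw [← opT_coe, map_smul, opT_N]
  · rw [← opDel_coe, map_smul, opDel_N_eq_zero n ρ θ hρ]
    funext a
    exact mul_zero (1 / 2 : ℂ)
  · have key : ψ = opN (n + 2) (opDel (n + 1) (opH (n + 1) (opDel' n ((1 / 2 : ℂ) • opN n ρ))))
        + opDel (n + 1) (opN (n + 1) (θ - (1 / 2 : ℂ) • opDel n (opH n ρ))) := by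
      have e1 : opH (n + 1) (opDel' n ρ) = (2 : ℂ) • (θ - opN (n + 1) θ) := by
        rw [hρ, opH_sub_apply]
      have e2 : opN n ρ = ρ - (1 / 2 : ℂ) • (opH n ρ - opT n (opH n ρ)) := by
        rw [sub_opH_apply]; module
      have e3 : opH (n + 1) (opDel' n (opH n ρ - opT n (opH n ρ)))
          = (2 : ℂ) • (opDel n (opH n ρ) - opN (n + 1) (opDel n (opH n ρ))) := by
        rw [← one_sub_opT_opDel, opH_sub_apply]
      have e4 : opH (n + 1) (opDel' n ((1 / 2 : ℂ) • opN n ρ)) =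
          θ - opN (n + 1) (θ - (1 / 2 : ℂ) • opDel n (opH n ρ))
            - (1 / 2 : ℂ) • opDel n (opH n ρ) := by
        rw [e2]
        generalize opH n ρ - opT n (opH n ρ) = κ at e3 ⊢
        have e6 : opH (n + 1) (opDel' n ((1 / 2 : ℂ) • (ρ - (1 / 2 : ℂ) • κ))) =
            (1 / 2 : ℂ) • (opH (n + 1) (opDel' n ρ)
              - (1 / 2 : ℂ) • opH (n + 1) (opDel' n κ)) := by
          rw [map_smul, map_smul, map_sub, map_sub, map_smul, map_smul]
        rw [e6, e1, e3, map_sub, map_smul]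
        module
      have e5 : opDel (n + 1) (opDel n (opH n ρ)) = 0 := opDel_sq n _
      have e7 : opDel (n + 1) ((1 / 2 : ℂ) • opDel n (opH n ρ)) = 0 := by
        rw [map_smul, e5]
        exact smul_zero (A := Coch A (n + 2)) (_ : ℂ)
      rw [e4, map_sub (opDel (n + 1)) (_ - _) _, e7, sub_zero, map_sub (opDel (n + 1)) θ _, hθ,
        map_sub (opN (n + 2)) ψ _, hδN, opN_fix _ _ hTψ, sub_add_cancel]
    have := congrArg (fun f : Coch A (n + 2) => (f : (Fin (n + 3) → A) → ℂ)) key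
    rw [cycS, ← opDel'_coe, ← opH_coe, ← opDel_coe, ← opN_coe, ← opDel_coe]
    exact this
  · refine (opN_norm _ _).trans ?_
    have h1 := norm_sub_le θ ((1 / 2 : ℂ) • opDel n (opH n ρ))
    have h2 : ‖(1 / 2 : ℂ) • opDel n (opH n ρ)‖ ≤ n * (n + 2) * (c₁ * c₂ * ‖ψ‖) := by
      rw [norm_smul]
      have h3 := opDel_norm n (opH n ρ)
      have h4 := opH_norm n ρ
      have h5 : (n : ℝ) * ‖ρ‖ ≤ n * (2 * (c₁ * c₂ * ‖ψ‖)) :=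
        mul_le_mul_of_nonneg_left hρn (Nat.cast_nonneg n)
      have h6 : ((n : ℝ) + 2) * ‖opH n ρ‖ ≤ (n + 2) * (n * (2 * (c₁ * c₂ * ‖ψ‖))) :=
        mul_le_mul_of_nonneg_left (h4.trans h5) (by positivity)
      have h7 : ‖(1 / 2 : ℂ)‖ = 1 / 2 := by simp
      rw [h7]
      nlinarith
    have h8 : c₁ * ‖ψ‖ ≤ c₁ * c₂ * ‖ψ‖ := by
      have : 0 ≤ c₁ * ‖ψ‖ := mul_nonneg hc₁0 (norm_nonneg _)
      nlinarith
    nlinarith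
  · rw [norm_smul]
    have h7 : ‖(1 / 2 : ℂ)‖ = 1 / 2 := by simp
    have := opN_norm n ρ
    rw [h7]
    linarith
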